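/- Let Z ⊆ ℝ^d be convex and compact, ‖·‖ a norm on ℝ^d with dual norm ‖·‖_*, and ω : Z → ℝ a convex continuous distance-generating function that is 1-strongly convex with respect to ‖·‖ on Z° := {z ∈ Z : ∂ω(z) ≠ ∅}, with set width Ω := max_{z∈Z} ω(z) − min_{z∈Z} ω(z). Let f^1,…,f^T : Z → ℝ be convex with subgradients bounded by G in ‖·‖_*. Then the generalized Mirror Descent iterates z^1 := argmin_{z∈Z} ω(z), z^{t+1} ∈ argmin_{z'∈Z}{⟨γ (1/T)∇f^t(z^t) − ∇ω(z^t), z'⟩ + ω(z')} with γ = √(2ΩT/G²)·(1)… explicitly γ = √(2Ω/((1/T)²G²T)), chosen using only z^t and f^t, satisfy (1/T) Σ_{t=1}^T f^t(z^t) − inf_{z∈Z} (1/T) Σ_{t=1}^T f^t(z) ≤ G √(2Ω/T); in particular the average regret is O(1/√T). -/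

import Mathlib

/-! Each step of Mirror Descent is analysed through the Bregman divergence
`D(x, y) = ω y - ω x - (y - x) ⬝ᵥ gw x`. With `x = z t` and `p = z (t + 1)`, the optimality of `p`
gives the three-point inequality
`γ/T * ⟨gf, p - w⟩ ≤ D(x, w) - D(p, w) - D(x, p)`, and strong convexity gives
`D(x, p) ≥ ‖x - p‖² / 2`. Young's inequality absorbs `γ/T * ⟨gf, x - p⟩` in this last term at the cost
of `(γ G / T)² / 2`, and the sum over `t` telescopes with `D(z 1, w) ≤ Ω`. The choice of `γ`
balances the two remaining terms. When `Ω = 0` the step size vanishes, but then strong convexity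
forces `Z` to be a single point.

The delicate point is that `Z°` need not be convex, while strong convexity is only known on `Z°` and
an iterate minimises with *some* subgradient rather than with `gw`. Both facts are therefore first
established on the relative interior of `Z`, which is convex, contained in `Z°`
(by the Riesz extension theorem, `exists_subgradient`) and reachable from every point of
`Z` along segments; they pass to the boundary by the continuity of `ω` and `gw` (`bregman_ge`,
`optimality`). -/

open Matrix Finset

/-- The set `Z° = {z ∈ Z : ∂ω(z) ≠ ∅}` of points of `Z` where `ω` admits a subgradient
(relative to `Z`). -/
def subdiffNonempty {d : ℕ} (Z : Set (Fin d → ℝ)) (ω : (Fin d → ℝ) → ℝ) :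
    Set (Fin d → ℝ) :=
  {z ∈ Z | ∃ g : Fin d → ℝ, ∀ z' ∈ Z, ω z + (z' - z) ⬝ᵥ g ≤ ω z'}

/-! ### Relative interior -/

/-- The algebraic relative interior: the points of `Z` from which every segment ending in `Z`
can be prolonged backwards inside `Z`. -/
def relCore {d : ℕ} (Z : Set (Fin d → ℝ)) : Set (Fin d → ℝ) :=
  {x ∈ Z | ∀ y ∈ Z, ∃ ε : ℝ, 0 < ε ∧ x - ε • (y - x) ∈ Z}

theorem relCore_nonempty {d : ℕ} {Z : Set (Fin d → ℝ)} (hZ : Convex ℝ Z) (hne : Z.Nonempty) :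
    (relCore Z).Nonempty := by
  obtain ⟨x, hx⟩ := hne.intrinsicInterior hZ
  refine ⟨x, intrinsicInterior_subset hx, fun y hy => ?_⟩
  obtain ⟨x', hx', rfl⟩ := mem_intrinsicInterior.1 hx
  have hyS : y ∈ affineSpan ℝ Z := subset_affineSpan ℝ Z hy
  let c : ℝ → affineSpan ℝ Z := fun s =>
    ⟨AffineMap.lineMap (x' : Fin d → ℝ) y s, AffineMap.lineMap_mem s x'.2 hyS⟩
  have hc : Continuous c := by
    apply Continuous.subtype_mk
    exact AffineMap.lineMap_continuous
  have hc0 : c 0 = x' := by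
    apply Subtype.ext
    simp [c]
  have hev : ∀ᶠ s in nhds (0 : ℝ), c s ∈ interior ((↑) ⁻¹' Z : Set (affineSpan ℝ Z)) := by
    apply hc.continuousAt.eventually_mem
    rw [hc0]
    exact isOpen_interior.mem_nhds hx'
  obtain ⟨δ, hδ, hb⟩ := Metric.eventually_nhds_iff.1 hev
  have h1 : c (-(δ / 2)) ∈ interior ((↑) ⁻¹' Z : Set (affineSpan ℝ Z)) := by
    apply hb
    rw [Real.dist_eq, sub_zero, abs_neg, abs_of_pos (by linarith)]
    linarith
  have h2 : (c (-(δ / 2)) : Fin d → ℝ) ∈ Z :=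
    Set.mem_preimage.1 (interior_subset h1)
  refine ⟨δ / 2, by linarith, ?_⟩
  convert h2 using 1
  simp only [c, AffineMap.lineMap_apply, vsub_eq_sub, vadd_eq_add]
  module

theorem segment_mem_relCore {d : ℕ} {Z : Set (Fin d → ℝ)} (hZ : Convex ℝ Z)
    {x y : Fin d → ℝ} (hx : x ∈ relCore Z) (hy : y ∈ Z) {s : ℝ} (hs : 0 < s) (hs1 : s ≤ 1) :
    y + s • (x - y) ∈ relCore Z := by
  refine ⟨?_, fun q hq => ?_⟩
  · have := hZ hy hx.1 (by linarith : 0 ≤ 1 - s) hs.le (by ring)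
    convert this using 1
    module
  · obtain ⟨ε, hε, hx'⟩ := hx.2 q hq
    -- `x` is the convex combination of `x - ε (q - x)` and `q` with weights `1/(1+ε)`, `ε/(1+ε)`
    set α : ℝ := s / (1 + ε) with hα
    have hα0 : 0 < α := by positivity
    have hαs : α * (1 + ε) = s := by rw [hα]; field_simp
    refine ⟨α * ε, by positivity, ?_⟩
    set x' := x - ε • (q - x) with hx'd
    have hxe : x' + ε • q = (1 + ε) • x := by rw [hx'd]; module
    have hsx : s • x = α • x' + (α * ε) • q := by
      rw [← hαs, mul_smul, ← hxe]; module
    set δ : ℝ := α * ε with hδ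
    have hδ0 : 0 < δ := by positivity
    have hmem := hZ.sum_mem (t := Finset.univ) (w := ![(1 + δ) * α, δ * δ, (1 + δ) * (1 - s)])
      (z := ![x', q, y]) ?_ ?_ ?_
    · convert hmem using 1
      simp only [Fin.sum_univ_three, Matrix.cons_val]
      have : y + s • (x - y) = (1 - s) • y + (α • x' + δ • q) := by rw [← hsx]; module
      rw [this]
      module
    · intro i _
      fin_cases i
      · simp; positivity
      · simp; positivity
      · simp; exact mul_nonneg (by linarith) (by linarith)
    · simp only [Fin.sum_univ_three, Matrix.cons_val]
      have : α + δ = s := by rw [hδ]; linarith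
      linear_combination (1 + δ) * this
    · intro i _
      fin_cases i <;> simp [hx', hq, hy]

/-! ### Existence of subgradients -/

/-- Subgradient at the origin of a convex function on an absorbing convex set: the Riesz extension
theorem applied to the cone generated by the epigraph. -/
theorem exists_linear_le {V : Type*} [AddCommGroup V] [Module ℝ V] {S : Set V} {φ : V → ℝ}
    (hφ : ConvexOn ℝ S φ) (h0 : φ 0 = 0)
    (habs : ∀ v, ∃ ε : ℝ, 0 < ε ∧ ε • v ∈ S) :
    ∃ g : V →ₗ[ℝ] ℝ, ∀ v ∈ S, g v ≤ φ v := by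
  have h0S : (0 : V) ∈ S := by
    obtain ⟨ε, _, h⟩ := habs 0
    simpa using h
  let s : PointedCone ℝ (V × ℝ) :=
    { carrier := {p | ∃ l : ℝ, 0 < l ∧ l • p.1 ∈ S ∧ φ (l • p.1) ≤ l * p.2}
      zero_mem' := ⟨1, one_pos, by simpa using h0S, by simp [h0]⟩
      smul_mem' := by
        rintro ⟨c, hc⟩ ⟨v, r⟩ ⟨l, hl, hS, hle⟩
        have hc : 0 ≤ c := hc
        rcases hc.eq_or_lt with rfl | hc
        · refine ⟨1, one_pos, ?_, ?_⟩ <;> simp [h0S, h0]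
        · have e : (l / c) • c • v = l • v := by
            rw [smul_smul]; congr 1; field_simp
          refine ⟨l / c, by positivity, ?_, ?_⟩
          · change (l / c) • c • v ∈ S
            rw [e]; exact hS
          · change φ ((l / c) • c • v) ≤ l / c * (c * r)
            rw [e]
            calc _ ≤ l * r := hle
              _ = _ := by field_simp
      add_mem' := by
        rintro ⟨v, r⟩ ⟨v', r'⟩ ⟨l, hl, hS, hle⟩ ⟨m, hm, hS', hle'⟩
        have e : (l * m / (l + m)) • (v + v') = (m / (l + m)) • l • v + (l / (l + m)) • m • v' := by
          simp only [smul_smul, smul_add]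
          congr 2 <;> ring
        have h1 : 0 ≤ m / (l + m) := by positivity
        have h2 : 0 ≤ l / (l + m) := by positivity
        have h3 : m / (l + m) + l / (l + m) = 1 := by field_simp; ring
        refine ⟨l * m / (l + m), by positivity, ?_, ?_⟩
        · change (l * m / (l + m)) • (v + v') ∈ S
          rw [e]
          exact hφ.1 hS hS' h1 h2 h3
        · change φ ((l * m / (l + m)) • (v + v')) ≤ (l * m / (l + m)) * (r + r')
          rw [e]
          refine (hφ.2 hS hS' h1 h2 h3).trans ?_
          simp only [smul_eq_mul]
          have a1 := mul_le_mul_of_nonneg_left hle h1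
          have a2 := mul_le_mul_of_nonneg_left hle' h2
          have : (l * m / (l + m)) * (r + r') =
            m / (l + m) * (l * r) + l / (l + m) * (m * r') := by ring
          simp only at a1 a2
          linarith }
  let f : (V × ℝ) →ₗ.[ℝ] ℝ :=
    { domain := (⊥ : Submodule ℝ V).prod ⊤
      toFun := (LinearMap.snd ℝ V ℝ).comp (Submodule.subtype _) }
  have nonneg : ∀ x : f.domain, (x : V × ℝ) ∈ s → 0 ≤ f x := by
    rintro ⟨⟨v, r⟩, hv⟩ ⟨l, hl, -, hle⟩
    have hv0 : v = 0 := by simpa [f] using hv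
    subst hv0
    simp only [smul_zero, h0] at hle
    change 0 ≤ r
    exact nonneg_of_mul_nonneg_right hle hl
  have dense : ∀ y, ∃ x : f.domain, (x : V × ℝ) + y ∈ s := by
    rintro ⟨v, r⟩
    obtain ⟨ε, hε, hS⟩ := habs v
    refine ⟨⟨(0, φ (ε • v) / ε - r), by simp [f]⟩, ε, hε, ?_, ?_⟩
    · simpa using hS
    · simp only [Prod.mk_add_mk, zero_add, sub_add_cancel]
      rw [mul_div_cancel₀ _ hε.ne']
  obtain ⟨g, hg1, hg2⟩ := riesz_extension s f nonneg dense
  refine ⟨-(g.comp (LinearMap.inl ℝ V ℝ)), fun v hv => ?_⟩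
  have h1 : 0 ≤ g (v, φ v) := hg2 _ ⟨1, one_pos, by simpa using hv, by simp⟩
  have h2 : g ((0 : V), φ v) = φ v := hg1 ⟨(0, φ v), by simp [f]⟩
  have h3 : g (v, φ v) = g (v, 0) + g ((0 : V), φ v) := by rw [← map_add]; simp
  simp only [LinearMap.neg_apply, LinearMap.comp_apply, LinearMap.inl_apply]
  linarith

theorem exists_subgradient {d : ℕ} {Z : Set (Fin d → ℝ)} {ω : (Fin d → ℝ) → ℝ}
    (hω : ConvexOn ℝ Z ω) {x : Fin d → ℝ} (hx : x ∈ relCore Z) :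
    x ∈ subdiffNonempty Z ω := by
  have hZ := hω.1
  have shrink : ∀ {v : Fin d → ℝ} {ε δ : ℝ}, x + ε • v ∈ Z → 0 < δ → δ ≤ ε → x + δ • v ∈ Z := by
    intro v ε δ h hδ hle
    have hε : 0 < ε := hδ.trans_le hle
    have := hZ.add_smul_sub_mem hx.1 h (t := δ / ε)
      ⟨by positivity, by rw [div_le_one hε]; exact hle⟩
    rwa [add_sub_cancel_left, smul_smul, div_mul_cancel₀ _ hε.ne'] at this
  have pos : ∀ {v : Fin d → ℝ} {ε c : ℝ}, 0 < ε → x + ε • v ∈ Z → 0 < c →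
      ∃ δ : ℝ, 0 < δ ∧ x + δ • (c • v) ∈ Z := by
    intro v ε c hε h hc
    refine ⟨ε / c, by positivity, ?_⟩
    rwa [smul_smul, div_mul_cancel₀ _ hc.ne']
  -- the feasible directions at `x` form a linear subspace, since `x` is relatively interior
  let V : Submodule ℝ (Fin d → ℝ) :=
    { carrier := {v | ∃ ε : ℝ, 0 < ε ∧ x + ε • v ∈ Z}
      zero_mem' := ⟨1, one_pos, by simpa using hx.1⟩
      add_mem' := by
        rintro v w ⟨ε, hε, h⟩ ⟨δ, hδ, h'⟩
        have hm : 0 < min ε δ := lt_min hε hδ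
        refine ⟨min ε δ / 2, by positivity, ?_⟩
        have := hZ (shrink h hm (min_le_left _ _)) (shrink h' hm (min_le_right _ _))
          (by norm_num : (0 : ℝ) ≤ 1 / 2) (by norm_num : (0 : ℝ) ≤ 1 / 2) (by norm_num)
        convert this using 1
        module
      smul_mem' := by
        rintro c v ⟨ε, hε, h⟩
        rcases lt_trichotomy c 0 with hc | rfl | hc
        · obtain ⟨δ, hδ, h'⟩ := hx.2 _ h
          have h2 : x + (δ * ε) • (-v) ∈ Z := by
            convert h' using 1
            module
          obtain ⟨η, hη, h3⟩ := pos (mul_pos hδ hε) h2 (neg_pos.2 hc)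
          refine ⟨η, hη, ?_⟩
          convert h3 using 1
          module
        · exact ⟨1, one_pos, by simpa using hx.1⟩
        · exact pos hε h hc }
  have hφ : ConvexOn ℝ {v : V | x + (v : Fin d → ℝ) ∈ Z} (fun v : V => ω (x + v) - ω x) := by
    refine ⟨?_, ?_⟩
    · intro v hv w hw a b ha hb hab
      have := hZ hv hw ha hb hab
      have e : x + ((a • v + b • w : V) : Fin d → ℝ) = a • (x + (v : Fin d → ℝ)) + b • (x + w) := by
        obtain rfl : a = 1 - b := by linarith
        push_cast
        module
      simpa only [Set.mem_ofPred_eq, e] using this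
    · intro v hv w hw a b ha hb hab
      have := hω.2 hv hw ha hb hab
      have e : x + ((a • v + b • w : V) : Fin d → ℝ) = a • (x + (v : Fin d → ℝ)) + b • (x + w) := by
        obtain rfl : a = 1 - b := by linarith
        push_cast
        module
      simp only [smul_eq_mul] at this ⊢
      rw [e]
      obtain rfl : a = 1 - b := by linarith
      linarith
  obtain ⟨g, hg⟩ := exists_linear_le hφ (by simp) (fun v => by
    obtain ⟨ε, hε, h⟩ := v.2
    exact ⟨ε, hε, by simpa using h⟩)
  obtain ⟨g', hg'⟩ := g.exists_extend
  refine ⟨hx.1, fun i => g' (Pi.single i 1), fun y hy => ?_⟩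
  have hyV : y - x ∈ V := ⟨1, one_pos, by simpa using hy⟩
  have h1 := hg ⟨y - x, hyV⟩ (by simpa using hy)
  have h2 : g ⟨y - x, hyV⟩ = g' (y - x) := by rw [← hg']; rfl
  have h3 : g' (y - x) = (y - x) ⬝ᵥ fun i => g' (Pi.single i 1) := by
    rw [LinearMap.pi_apply_eq_sum_univ g' (y - x)]
    simp only [dotProduct, smul_eq_mul]
    refine Finset.sum_congr rfl fun i _ => ?_
    congr 2
    ext j
    simp [Pi.single_apply, eq_comm]
  rw [h2, h3] at h1
  simp only [add_sub_cancel] at h1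
  linarith

/-! ### Passing to the boundary: optimality and strong convexity -/

/-- The point at parameter `1/(n+1)` on the segment from `y` to `c`; it approaches `y`. -/
noncomputable def approach {d : ℕ} (y c : Fin d → ℝ) (n : ℕ) : Fin d → ℝ := y + (1 / ((n : ℝ) + 1)) • (c - y)

theorem approach_tendsto {d : ℕ} (y c : Fin d → ℝ) :
    Filter.Tendsto (approach y c) Filter.atTop (nhds y) := by
  have := (tendsto_one_div_add_atTop_nhds_zero_nat (𝕜 := ℝ)).smul_const (c - y)
  have h := this.const_add y
  rw [zero_smul, add_zero] at h
  exact h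

theorem approach_mem {d : ℕ} {Z : Set (Fin d → ℝ)} (hZ : Convex ℝ Z)
    {c y : Fin d → ℝ} (hc : c ∈ relCore Z) (hy : y ∈ Z) (n : ℕ) : approach y c n ∈ relCore Z := by
  refine segment_mem_relCore hZ hc hy (by positivity) ?_
  rw [div_le_one (by positivity)]
  have : (0 : ℝ) ≤ n := Nat.cast_nonneg n
  linarith

theorem tendsto_comp_approach {d : ℕ} {X : Type*} [TopologicalSpace X] {S : Set (Fin d → ℝ)}
    {F : (Fin d → ℝ) → X} (hF : ContinuousOn F S) {y c : Fin d → ℝ} (hy : y ∈ S)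
    (hS : ∀ n, approach y c n ∈ S) :
    Filter.Tendsto (fun n => F (approach y c n)) Filter.atTop (nhds (F y)) :=
  (hF y hy).tendsto.comp
    (tendsto_nhdsWithin_iff.2 ⟨approach_tendsto y c, Filter.Eventually.of_forall hS⟩)

theorem tendsto_dot {d : ℕ} {u v : ℕ → Fin d → ℝ} {a b : Fin d → ℝ}
    (hu : Filter.Tendsto u Filter.atTop (nhds a)) (hv : Filter.Tendsto v Filter.atTop (nhds b)) :
    Filter.Tendsto (fun n => u n ⬝ᵥ v n) Filter.atTop (nhds (a ⬝ᵥ b)) := by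
  have hc : Continuous fun p : (Fin d → ℝ) × (Fin d → ℝ) => p.1 ⬝ᵥ p.2 :=
    continuous_fst.dotProduct continuous_snd
  exact (hc.tendsto (a, b)).comp (hu.prodMk_nhds hv)

/-- If `p` minimises `a ⬝ᵥ · + ω` over `Z`, the first-order condition holds for the selected
subgradient `gw p`, not merely for the subgradient `-a`. This is where continuity of `gw` is used:
the condition is obtained along segments into the relative interior. -/
theorem optimality {d : ℕ} {Z : Set (Fin d → ℝ)} {ω : (Fin d → ℝ) → ℝ} (hω : ConvexOn ℝ Z ω)
    {gw : (Fin d → ℝ) → (Fin d → ℝ)}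
    (hsel : ∀ z ∈ subdiffNonempty Z ω, ∀ z' ∈ Z, ω z + (z' - z) ⬝ᵥ gw z ≤ ω z')
    (hcont : ContinuousOn gw (subdiffNonempty Z ω))
    {a p : Fin d → ℝ} (hp : p ∈ Z) (hmin : ∀ w ∈ Z, a ⬝ᵥ p + ω p ≤ a ⬝ᵥ w + ω w) :
    p ∈ subdiffNonempty Z ω ∧ ∀ w ∈ Z, 0 ≤ (w - p) ⬝ᵥ (a + gw p) := by
  have hpo : p ∈ subdiffNonempty Z ω := by
    refine ⟨hp, -a, fun w hw => ?_⟩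
    have := hmin w hw
    rw [dotProduct_neg, sub_dotProduct, dotProduct_comm w a, dotProduct_comm p a]
    linarith
  refine ⟨hpo, ?_⟩
  have key : ∀ c ∈ relCore Z, 0 ≤ (c - p) ⬝ᵥ (a + gw p) := by
    intro c hc
    have hmem := approach_mem hω.1 hc hp
    have hmemo := fun n => exists_subgradient hω (hmem n)
    refine ge_of_tendsto' (tendsto_dot tendsto_const_nhds
      ((tendsto_comp_approach hcont hpo hmemo).const_add a)) (fun n => ?_)
    have h1 := hmin _ (hmem n).1
    have h2 := hsel _ (hmemo n) p hp
    have hs : (0 : ℝ) < 1 / ((n : ℝ) + 1) := by positivity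
    have e1 : p - approach p c n = -((1 / ((n : ℝ) + 1)) • (c - p)) := by
      simp only [approach]; module
    have e2 : a ⬝ᵥ approach p c n = a ⬝ᵥ p + (1 / ((n : ℝ) + 1)) * ((c - p) ⬝ᵥ a) := by
      simp only [approach]
      rw [dotProduct_add, dotProduct_smul, dotProduct_comm a (c - p), smul_eq_mul]
    rw [e1, neg_dotProduct, smul_dotProduct, smul_eq_mul] at h2
    rw [dotProduct_add]
    refine nonneg_of_mul_nonneg_right (a := 1 / ((n : ℝ) + 1)) ?_ hs
    rw [mul_add]
    linarith
  intro w hw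
  obtain ⟨c, hc⟩ := relCore_nonempty hω.1 ⟨p, hp⟩
  exact ge_of_tendsto' (tendsto_dot ((approach_tendsto w c).sub_const p) tendsto_const_nhds)
    (fun n => key _ (approach_mem hω.1 hc hw n))

/-- Strong convexity in Bregman form. On the relative interior, splitting the segment at its midpoint
improves a constant `k` in `k ‖x - y‖² ≤ D(x, y)` to `k/2 + 1/4`, whose iteration from `0` tends
to `1/2`. -/
theorem bregman_ge {d : ℕ} {Z : Set (Fin d → ℝ)} {ω : (Fin d → ℝ) → ℝ} (hω : ConvexOn ℝ Z ω)
    (hωcont : ContinuousOn ω Z) {nrm : (Fin d → ℝ) → ℝ}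
    (hhom : ∀ (c : ℝ) (u : Fin d → ℝ), nrm (c • u) = |c| * nrm u)
    {gw : (Fin d → ℝ) → (Fin d → ℝ)}
    (hsel : ∀ z ∈ subdiffNonempty Z ω, ∀ z' ∈ Z, ω z + (z' - z) ⬝ᵥ gw z ≤ ω z')
    (hcont : ContinuousOn gw (subdiffNonempty Z ω))
    (hstrong : ∀ z' ∈ subdiffNonempty Z ω, ∀ z'' ∈ subdiffNonempty Z ω,
      nrm (z' - z'') ^ 2 ≤ (z' - z'') ⬝ᵥ (gw z' - gw z''))
    {x y : Fin d → ℝ} (hx : x ∈ subdiffNonempty Z ω) (hy : y ∈ Z) :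
    nrm (x - y) ^ 2 / 2 ≤ ω y - ω x - (y - x) ⬝ᵥ gw x := by
  have hhalf : ∀ n : ℕ, ∀ x ∈ relCore Z, ∀ y ∈ relCore Z,
      (1 / 2 - 1 / 2 * (1 / 2 : ℝ) ^ n) * nrm (x - y) ^ 2 ≤ ω y - ω x - (y - x) ⬝ᵥ gw x := by
    intro n
    induction n with
    | zero =>
      intro x hx y hy
      have := hsel x (exists_subgradient hω hx) y hy.1
      simp only [pow_zero]
      linarith
    | succ n ih =>
      intro x hx y hy
      set m := y + (1 / 2 : ℝ) • (x - y) with hm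
      have hmD : m ∈ relCore Z :=
        segment_mem_relCore hω.1 hx hy.1 (by norm_num) (by norm_num)
      have h1 := ih x hx m hmD
      have h2 := ih m hmD y hy
      have h3 := hstrong m (exists_subgradient hω hmD) x (exists_subgradient hω hx)
      have e1 : x - m = (1 / 2 : ℝ) • (x - y) := by rw [hm]; module
      have e2 : m - y = (1 / 2 : ℝ) • (x - y) := by rw [hm]; module
      have e3 : m - x = (-(1 / 2) : ℝ) • (x - y) := by rw [hm]; module
      have e4 : y - m = (-(1 / 2) : ℝ) • (x - y) := by rw [hm]; module
      have e5 : y - x = (-1 : ℝ) • (x - y) := by module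
      rw [e1, hhom, e3, smul_dotProduct, smul_eq_mul] at h1
      rw [e2, hhom, e4, smul_dotProduct, smul_eq_mul] at h2
      rw [e3, hhom, smul_dotProduct, dotProduct_sub, smul_eq_mul] at h3
      rw [e5, smul_dotProduct, smul_eq_mul]
      rw [abs_of_pos (by norm_num)] at h1 h2
      rw [abs_neg, abs_of_pos (by norm_num)] at h3
      rw [pow_succ]
      nlinarith [h1, h2, h3]
  have hlim : ∀ x ∈ relCore Z, ∀ y ∈ relCore Z,
      1 / 2 * nrm (x - y) ^ 2 ≤ ω y - ω x - (y - x) ⬝ᵥ gw x := by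
    intro x hx y hy
    have ht := tendsto_pow_atTop_nhds_zero_of_lt_one (r := (1 / 2 : ℝ)) (by norm_num) (by norm_num)
    have ht2 := ((ht.const_mul (1 / 2)).const_sub (1 / 2)).mul_const (nrm (x - y) ^ 2)
    rw [mul_zero, sub_zero] at ht2
    exact le_of_tendsto' ht2 (fun n => hhalf n x hx y hy)
  obtain ⟨c, hc⟩ := relCore_nonempty hω.1 ⟨y, hy⟩
  have hxm := approach_mem hω.1 hc hx.1
  have hym := approach_mem hω.1 hc hy
  have t1 := tendsto_comp_approach hωcont hy (fun n => (hym n).1)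
  have t2 := tendsto_comp_approach hωcont hx.1 (fun n => (hxm n).1)
  have t3 := tendsto_comp_approach hcont hx (fun n => exists_subgradient hω (hxm n))
  have t4 := (t1.sub t2).sub (tendsto_dot ((approach_tendsto y c).sub (approach_tendsto x c)) t3)
  have t5 := (((tendsto_one_div_add_atTop_nhds_zero_nat (𝕜 := ℝ)).const_sub 1).pow 2).mul_const
    (1 / 2 * nrm (x - y) ^ 2)
  have hle := le_of_tendsto_of_tendsto' t5 t4 (fun n => ?_)
  · simp only [sub_zero] at hle
    linarith
  · refine le_trans (le_of_eq ?_) (hlim _ (hxm n) _ (hym n))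
    have e : approach x c n - approach y c n = (1 - 1 / ((n : ℝ) + 1)) • (x - y) := by
      simp only [approach]; module
    rw [e, hhom, mul_pow, sq_abs]
    ring

/-! ### The dual norm -/

/-- A linear functional on a finite-dimensional space is bounded on the unit ball of any norm; this
keeps the supremum defining the dual norm from being a junk value. -/
theorem linear_bounded {V : Type*} [AddCommGroup V] [Module ℝ V] [FiniteDimensional ℝ V]
    {nrm : V → ℝ} (hnonneg : ∀ u, 0 ≤ nrm u) (hdefinite : ∀ u, nrm u = 0 → u = 0)
    (hhom : ∀ (c : ℝ) (u : V), nrm (c • u) = |c| * nrm u)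
    (htri : ∀ u v : V, nrm (u + v) ≤ nrm u + nrm v) (φ : V →ₗ[ℝ] ℝ) :
    ∃ C : ℝ, ∀ u, nrm u ≤ 1 → φ u ≤ C := by
  let _ : Norm V := ⟨nrm⟩
  have core : NormedSpace.Core ℝ V :=
    { norm_nonneg := hnonneg
      norm_smul := hhom
      norm_triangle := htri
      norm_eq_zero_iff := fun u => ⟨hdefinite u, fun h => by
        have := hhom 0 0
        subst h
        rwa [zero_smul, abs_zero, zero_mul] at this⟩ }
  let _ : NormedAddCommGroup V := NormedAddCommGroup.ofCore core
  let _ : NormedSpace ℝ V := NormedSpace.ofCore core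
  let φ' : V →L[ℝ] ℝ := LinearMap.toContinuousLinearMap φ
  refine ⟨‖φ'‖, fun u hu => ?_⟩
  have h1 : ‖φ' u‖ ≤ ‖φ'‖ * ‖u‖ := φ'.le_opNorm u
  have h2 : ‖u‖ ≤ 1 := hu
  calc φ u ≤ ‖φ' u‖ := le_abs_self _
    _ ≤ ‖φ'‖ * ‖u‖ := h1
    _ ≤ ‖φ'‖ := mul_le_of_le_one_right (norm_nonneg _) h2

theorem dual_norm_bound {d : ℕ} {nrm : (Fin d → ℝ) → ℝ}
    (hnonneg : ∀ u, 0 ≤ nrm u) (hdefinite : ∀ u, nrm u = 0 → u = 0)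
    (hhom : ∀ (c : ℝ) (u : Fin d → ℝ), nrm (c • u) = |c| * nrm u)
    (htri : ∀ u v : Fin d → ℝ, nrm (u + v) ≤ nrm u + nrm v) {g : Fin d → ℝ} {G : ℝ}
    (hg : sSup {r : ℝ | ∃ w, nrm w ≤ 1 ∧ r = w ⬝ᵥ g} ≤ G) (u : Fin d → ℝ) :
    u ⬝ᵥ g ≤ nrm u * G := by
  obtain ⟨C, hC⟩ := linear_bounded hnonneg hdefinite hhom htri
    ((LinearMap.mk ⟨fun u => u ⬝ᵥ g, fun a b => add_dotProduct a b g⟩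
      (fun c a => by simp [smul_dotProduct])) : (Fin d → ℝ) →ₗ[ℝ] ℝ)
  have hbdd : BddAbove {r : ℝ | ∃ w, nrm w ≤ 1 ∧ r = w ⬝ᵥ g} := by
    refine ⟨C, ?_⟩
    rintro r ⟨w, hw, rfl⟩
    exact hC w hw
  rcases (hnonneg u).eq_or_lt with h | h
  · rw [hdefinite u h.symm, zero_dotProduct, ← hdefinite u h.symm, ← h, zero_mul]
  · have := (le_csSup hbdd ⟨(nrm u)⁻¹ • u, by
      rw [hhom, abs_of_pos (inv_pos.2 h), inv_mul_cancel₀ h.ne'], rfl⟩).trans hg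
    rw [smul_dotProduct, smul_eq_mul, inv_mul_le_iff₀ h] at this
    exact this

/-! ### The regret bound -/

/-- average-regret bound `G √(2Ω/T)` for generalized Mirror Descent with
uniform weights `θ^t = 1/T` and constant step size `γ = √(2Ω/((1/T)² G² T))`
(Theorem 5 of the paper specialized to uniform weights).  The update of `z^{t+1}` uses
only `z^t` and `f^t`, and the infimum over `Z` in the regret is expressed by
quantifying over `w ∈ Z`. -/
theorem mirror_descent_average_regret {d : ℕ}
    (Z : Set (Fin d → ℝ)) (hZconv : Convex ℝ Z) (hZcomp : IsCompact Z)
    (nrm : (Fin d → ℝ) → ℝ)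
    (hnonneg : ∀ u, 0 ≤ nrm u)
    (hdefinite : ∀ u, nrm u = 0 → u = 0)
    (hhom : ∀ (c : ℝ) (u : Fin d → ℝ), nrm (c • u) = |c| * nrm u)
    (htri : ∀ u v : Fin d → ℝ, nrm (u + v) ≤ nrm u + nrm v)
    (ω : (Fin d → ℝ) → ℝ) (hωconv : ConvexOn ℝ Z ω) (hωcont : ContinuousOn ω Z)
    (gw : (Fin d → ℝ) → (Fin d → ℝ))
    (hgwsel : ∀ z ∈ subdiffNonempty Z ω, ∀ z' ∈ Z, ω z + (z' - z) ⬝ᵥ gw z ≤ ω z')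
    (hgwcont : ContinuousOn gw (subdiffNonempty Z ω))
    (hstrong : ∀ z' ∈ subdiffNonempty Z ω, ∀ z'' ∈ subdiffNonempty Z ω,
      nrm (z' - z'') ^ 2 ≤ (z' - z'') ⬝ᵥ (gw z' - gw z''))
    (Om : ℝ) (hOm : Om = sSup (ω '' Z) - sInf (ω '' Z))
    (T : ℕ) (hT : 1 ≤ T)
    (f : ℕ → (Fin d → ℝ) → ℝ) (hfconv : ∀ t ∈ Finset.Icc 1 T, ConvexOn ℝ Z (f t))
    (gf : ℕ → (Fin d → ℝ) → (Fin d → ℝ))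
    (hgfsel : ∀ t ∈ Finset.Icc 1 T, ∀ z ∈ Z, ∀ z' ∈ Z,
      f t z + (z' - z) ⬝ᵥ gf t z ≤ f t z')
    (G : ℝ) (hG : 0 < G)
    (hgfbd : ∀ t ∈ Finset.Icc 1 T, ∀ z ∈ Z,
      sSup {r : ℝ | ∃ w, nrm w ≤ 1 ∧ r = w ⬝ᵥ gf t z} ≤ G)
    (γ : ℝ) (hγ : γ = Real.sqrt (2 * Om / ((1 / (T : ℝ)) ^ 2 * G ^ 2 * (T : ℝ))))
    (z : ℕ → Fin d → ℝ)
    (hz1 : z 1 ∈ Z ∧ ∀ w ∈ Z, ω (z 1) ≤ ω w)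
    (hstep : ∀ t ∈ Finset.Icc 1 T, z (t + 1) ∈ Z ∧ ∀ w ∈ Z,
      (γ • ((1 / (T : ℝ)) • gf t (z t)) - gw (z t)) ⬝ᵥ z (t + 1) + ω (z (t + 1))
        ≤ (γ • ((1 / (T : ℝ)) • gf t (z t)) - gw (z t)) ⬝ᵥ w + ω w) :
    ∀ w ∈ Z,
      (1 / (T : ℝ)) * ∑ t ∈ Finset.Icc 1 T, f t (z t)
          - (1 / (T : ℝ)) * ∑ t ∈ Finset.Icc 1 T, f t w
        ≤ G * Real.sqrt (2 * Om / (T : ℝ)) := by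
  intro w hw
  have hTpos : (0 : ℝ) < T := by exact_mod_cast hT
  have hbA : BddAbove (ω '' Z) := (hZcomp.image_of_continuousOn hωcont).bddAbove
  have hbB : BddBelow (ω '' Z) := (hZcomp.image_of_continuousOn hωcont).bddBelow
  have hwidth : ∀ x ∈ Z, ∀ y ∈ Z, ω x - ω y ≤ Om := by
    intro x hx y hy
    have h1 := le_csSup hbA (Set.mem_image_of_mem ω hx)
    have h2 := csInf_le hbB (Set.mem_image_of_mem ω hy)
    linarith
  have hopt1 := optimality hωconv hgwsel hgwcont (a := 0) hz1.1 (by simpa using hz1.2)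
  have hzmem : ∀ t ∈ Finset.Icc 1 T, z t ∈ subdiffNonempty Z ω := by
    intro t ht
    obtain ⟨h1, h2⟩ := Finset.mem_Icc.1 ht
    rcases h1.eq_or_lt with rfl | h1
    · exact hopt1.1
    · obtain ⟨s, rfl⟩ : ∃ s, t = s + 1 := ⟨t - 1, by omega⟩
      have hs := hstep s (Finset.mem_Icc.2 ⟨by omega, by omega⟩)
      exact (optimality hωconv hgwsel hgwcont hs.1 hs.2).1
  have hD1 : ω w - ω (z 1) - (w - z 1) ⬝ᵥ gw (z 1) ≤ Om := by
    have h1 := hopt1.2 w hw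
    rw [zero_add] at h1
    linarith [hwidth w hw (z 1) hz1.1]
  have hOm0 : 0 ≤ Om := by linarith [hwidth w hw w hw]
  rw [← mul_sub, ← Finset.sum_sub_distrib]
  have hlin : ∑ t ∈ Finset.Icc 1 T, (f t (z t) - f t w) ≤
      ∑ t ∈ Finset.Icc 1 T, (z t - w) ⬝ᵥ gf t (z t) := by
    refine Finset.sum_le_sum fun t ht => ?_
    have h1 := hgfsel t ht (z t) (hzmem t ht).1 w hw
    have e : w - z t = -(z t - w) := by abel
    rw [e, neg_dotProduct] at h1
    linarith
  rcases hOm0.eq_or_lt with h0 | hOmpos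
  · -- `ω` is constant on `Z`, so strong convexity makes every point of `Z` equal to `z 1`
    have hsing : ∀ y ∈ Z, z 1 = y := by
      intro y hy
      have h1 := bregman_ge hωconv hωcont hhom hgwsel hgwcont hstrong hopt1.1 hy
      have h2 := hopt1.2 y hy
      rw [zero_add] at h2
      have h3 := hwidth y hy (z 1) hz1.1
      have h4 : nrm (z 1 - y) = 0 := by
        apply pow_eq_zero_iff (two_ne_zero) |>.1
        nlinarith [sq_nonneg (nrm (z 1 - y))]
      exact sub_eq_zero.1 (hdefinite _ h4)
    have hs0 : ∑ t ∈ Finset.Icc 1 T, (f t (z t) - f t w) = 0 := by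
      refine Finset.sum_eq_zero fun t ht => ?_
      rw [← hsing _ (hzmem t ht).1, ← hsing w hw, sub_self]
    rw [hs0, mul_zero]
    positivity
  set D : ℕ → ℝ := fun t => ω w - ω (z t) - (w - z t) ⬝ᵥ gw (z t) with hD
  set η : ℝ := γ * (1 / (T : ℝ)) with hη
  have hγ2 : γ ^ 2 = 2 * Om * T / G ^ 2 := by
    rw [hγ, Real.sq_sqrt (by positivity)]
    field_simp
  have hγ0 : 0 < γ := by
    rw [hγ]
    exact Real.sqrt_pos.2 (by positivity)
  have hη0 : 0 < η := by positivity
  have hone : ∀ t ∈ Finset.Icc 1 T,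
      η * ((z t - w) ⬝ᵥ gf t (z t)) ≤ (η * G) ^ 2 / 2 + (D t - D (t + 1)) := by
    intro t ht
    have hs := hstep t ht
    have h1 := (optimality hωconv hgwsel hgwcont hs.1 hs.2).2 w hw
    have h2 := bregman_ge hωconv hωcont hhom hgwsel hgwcont hstrong (hzmem t ht) hs.1
    have h3 := dual_norm_bound hnonneg hdefinite hhom htri (hgfbd t ht (z t) (hzmem t ht).1)
      (z t - z (t + 1))
    have h4 := mul_le_mul_of_nonneg_left h3 hη0.le
    rw [smul_smul, ← hη] at h1
    simp only [hD]
    simp only [dotProduct_add, dotProduct_sub, dotProduct_smul, sub_dotProduct, smul_eq_mul]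
      at h1 h2 h4 ⊢
    nlinarith [sq_nonneg (η * G - nrm (z t - z (t + 1)))]
  have hsum := Finset.sum_le_sum hone
  have htel : ∑ t ∈ Finset.Icc 1 T, (D t - D (t + 1)) = D 1 - D (T + 1) := by
    have := Finset.sum_Ico_sub D (show 1 ≤ T + 1 by omega)
    rw [← Finset.Ico_add_one_right_eq_Icc, Finset.sum_congr rfl
      (fun t _ => (neg_sub (D (t + 1)) (D t)).symm), Finset.sum_neg_distrib, this]
    ring
  have hDlast : 0 ≤ D (T + 1) := by
    have hs := hstep T (Finset.mem_Icc.2 ⟨hT, le_rfl⟩)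
    have := hgwsel _ (optimality hωconv hgwsel hgwcont hs.1 hs.2).1 w hw
    simp only [hD]
    linarith
  rw [Finset.sum_add_distrib, htel, ← Finset.mul_sum, Finset.sum_const, Nat.card_Icc,
    Nat.add_sub_cancel, nsmul_eq_mul] at hsum
  set R := ∑ t ∈ Finset.Icc 1 T, (z t - w) ⬝ᵥ gf t (z t) with hR
  -- by the choice of `γ`, the accumulated Young terms amount to exactly `Om`
  have hbal : (T : ℝ) * ((η * G) ^ 2 / 2) = Om := by
    rw [hη, mul_pow, mul_pow, hγ2]
    field_simp
  have hRle : γ * (1 / (T : ℝ) * R) ≤ 2 * Om := by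
    have : η * R = γ * (1 / (T : ℝ) * R) := by rw [hη]; ring
    have hD1' : D 1 ≤ Om := hD1
    linarith
  have hfin : γ * (G * Real.sqrt (2 * Om / (T : ℝ))) = 2 * Om := by
    have e : Real.sqrt (2 * Om / (T : ℝ)) = γ * G / T := by
      rw [Real.sqrt_eq_iff_mul_self_eq (by positivity) (by positivity)]
      have : γ * G / T * (γ * G / T) = γ ^ 2 * G ^ 2 / T ^ 2 := by ring
      rw [this, hγ2]
      field_simp
    rw [e]
    have : γ * (G * (γ * G / T)) = γ ^ 2 * G ^ 2 / T := by ring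
    rw [this, hγ2]
    field_simp
  have hle : (1 / (T : ℝ)) * R ≤ G * Real.sqrt (2 * Om / (T : ℝ)) :=
    le_of_mul_le_mul_left (by linarith) hγ0
  exact (mul_le_mul_of_nonneg_left hlin (by positivity)).trans hle
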